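/- Let G be a nontrivial finite abelian group, let S be a UFIM over G∖{0} with irreducible factorization [ℓ] = I_1 ⊔ ⋯ ⊔ I_m, and for each 1 ≤ i ≤ m choose an element g_i ∈ S(I_i). Then Σ_{i=1}^m 1/ord(g_i) ≤ m/P^−(|G|) ≤ (log_2 |G|)/P^−(|G|), where P^−(n) denotes the smallest prime divisor of n. -/

import Mathlib

open Finset

/-- `S(I)` is minimal zero-sum: nonempty, zero-sum, and no proper nonempty
subfamily is zero-sum. -/
def IsMinZeroSum {G : Type*} [AddCommGroup G] {ℓ : ℕ} (g : Fin ℓ → G)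
    (I : Finset (Fin ℓ)) : Prop :=
  I.Nonempty ∧ ∑ i ∈ I, g i = 0 ∧ ∀ J ⊂ I, J.Nonempty → ∑ i ∈ J, g i ≠ 0

/-- `P` is an irreducible factorization of the indexed multiset `g`: a partition
of the index set all of whose parts are minimal zero-sum. -/
def IsFactorization {G : Type*} [AddCommGroup G] {ℓ : ℕ} (g : Fin ℓ → G)
    (P : Finpartition (Finset.univ : Finset (Fin ℓ))) : Prop :=
  ∀ I ∈ P.parts, IsMinZeroSum g I

/-- `g` is a unique factorization indexed multiset (UFIM) over `G∖{0}`: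
all elements are nonzero and there is exactly one irreducible factorization. -/
def IsUFIM {G : Type*} [AddCommGroup G] {ℓ : ℕ} (g : Fin ℓ → G) : Prop :=
  (∀ i, g i ≠ 0) ∧
  ∃! P : Finpartition (Finset.univ : Finset (Fin ℓ)), IsFactorization g P

/-- The cross number `k(S) = ∑ 1/ord(g_i)`. -/
noncomputable def crossNum {G : Type*} [AddCommGroup G] {ℓ : ℕ} (g : Fin ℓ → G) : ℝ :=
  ∑ i, (1 : ℝ) / (addOrderOf (g i) : ℝ)

/-- `K₁(G)`: the maximal cross number of a UFIM over `G∖{0}`. -/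
noncomputable def K1 (G : Type*) [AddCommGroup G] : ℝ :=
  sSup {x : ℝ | ∃ (ℓ : ℕ) (g : Fin ℓ → G), IsUFIM g ∧ crossNum g = x}

/-- `N₁(G)`: the maximal length of a UFIM over `G∖{0}`. -/
noncomputable def N1 (G : Type*) [AddCommGroup G] : ℕ :=
  sSup {n : ℕ | ∃ g : Fin n → G, IsUFIM g}

/-- `K(G)`: the maximal cross number of a minimal zero-sum indexed multiset over `G∖{0}`. -/
noncomputable def Kcross (G : Type*) [AddCommGroup G] : ℝ :=
  sSup {x : ℝ | ∃ (ℓ : ℕ) (g : Fin ℓ → G), (∀ i, g i ≠ 0) ∧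
    IsMinZeroSum g Finset.univ ∧ crossNum g = x}

/-- `g` is zero-sum free: no nonempty subfamily is zero-sum. -/
def IsZeroSumFree {G : Type*} [AddCommGroup G] {ℓ : ℕ} (g : Fin ℓ → G) : Prop :=
  ∀ I : Finset (Fin ℓ), I.Nonempty → ∑ i ∈ I, g i ≠ 0

/-- The little cross number `k(G)`: the maximal cross number of a zero-sum free
indexed multiset over `G∖{0}`. -/
noncomputable def littleCross (G : Type*) [AddCommGroup G] : ℝ :=
  sSup {x : ℝ | ∃ (ℓ : ℕ) (g : Fin ℓ → G), (∀ i, g i ≠ 0) ∧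
    IsZeroSumFree g ∧ crossNum g = x}

theorem ufim_extend {G : Type*} [AddCommGroup G] {ℓ : ℕ} (g : Fin ℓ → G) (n : ℕ) :
    ∀ (T U : Finset (Fin ℓ)) (Q : Finpartition T), (U \ T).card ≤ n → T ⊆ U →
      ∑ i ∈ T, g i = 0 → ∑ i ∈ U, g i = 0 → (∀ I ∈ Q.parts, IsMinZeroSum g I) →
      ∃ Q' : Finpartition U, Q.parts ⊆ Q'.parts ∧ ∀ I ∈ Q'.parts, IsMinZeroSum g I := by
  classical
  induction n with
  | zero =>
    intro T U Q hc hTU _ _ hQ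
    have h : U = T := by
      apply Finset.Subset.antisymm _ hTU
      rw [← Finset.sdiff_eq_empty_iff_subset]
      exact Finset.card_eq_zero.mp (by omega)
    subst h
    exact ⟨Q, Finset.Subset.refl _, hQ⟩
  | succ n ih =>
    intro T U Q hc hTU hT hU hQ
    by_cases hUT : U ⊆ T
    · have h : U = T := Finset.Subset.antisymm hUT hTU
      subst h
      exact ⟨Q, Finset.Subset.refl _, hQ⟩
    have hsd : ∑ i ∈ U \ T, g i = 0 := by
      have := Finset.sum_sdiff (f := g) hTU
      rw [hT, hU, add_zero] at this
      exact this
    have hne : (U \ T).Nonempty := Finset.sdiff_nonempty.mpr hUT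
    obtain ⟨I, hI, hmin⟩ := Finset.exists_min_image
      ((U \ T).powerset.filter (fun J => J.Nonempty ∧ ∑ i ∈ J, g i = 0)) Finset.card
      ⟨U \ T, by simp [hne, hsd]⟩
    simp only [Finset.mem_filter, Finset.mem_powerset] at hI hmin
    obtain ⟨hIs, hIne, hI0⟩ := hI
    have hImin : IsMinZeroSum g I := by
      refine ⟨hIne, hI0, fun J hJ hJne hJ0 => ?_⟩
      have h1 := hmin J ⟨hJ.subset.trans hIs, hJne, hJ0⟩
      have h2 := Finset.card_lt_card hJ
      omega
    have hdis : Disjoint T I :=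
      Finset.disjoint_of_subset_right hIs Finset.disjoint_sdiff
    have hIU : I ⊆ U := hIs.trans Finset.sdiff_subset
    obtain ⟨Q', h1, h2⟩ := ih (T ∪ I) U
      (Q.extend (b := I) (c := T ∪ I) hIne.ne_empty hdis rfl)
      (by
        have : U \ (T ∪ I) ⊂ U \ T := by
          obtain ⟨x, hx⟩ := hIne
          refine Finset.ssubset_iff_of_subset
            (Finset.sdiff_subset_sdiff (Finset.Subset.refl _) Finset.subset_union_left) |>.mpr
            ⟨x, hIs hx, by simp [hx]⟩
        have := Finset.card_lt_card this
        omega)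
      (Finset.union_subset hTU hIU)
      (by rw [Finset.sum_union hdis, hT, hI0, add_zero]) hU
      (by
        intro J hJ
        simp only [Finpartition.extend_parts, Finset.mem_insert] at hJ
        rcases hJ with rfl | hJ
        · exact hImin
        · exact hQ J hJ)
    refine ⟨Q', fun J hJ => h1 ?_, h2⟩
    simp [hJ]

theorem ufim_zero_sum {G : Type*} [AddCommGroup G] {ℓ : ℕ} (g : Fin ℓ → G) (hg : IsUFIM g)
    (P : Finpartition (Finset.univ : Finset (Fin ℓ))) (hP : IsFactorization g P)
    (T : Finset (Fin ℓ)) (hT : ∑ i ∈ T, g i = 0) (I : Finset (Fin ℓ)) (hI : I ∈ P.parts)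
    (x : Fin ℓ) (hxI : x ∈ I) (hxT : x ∈ T) : I ⊆ T := by
  have hU : ∑ i, g i = 0 := by
    have h := Finset.sum_biUnion (f := g) (s := P.parts) (t := id) P.disjoint
    rw [P.biUnion_parts] at h
    rw [h]
    exact Finset.sum_eq_zero fun J hJ => (hP J hJ).2.1
  obtain ⟨Q, -, hQ⟩ := ufim_extend g _ ∅ T (Finpartition.empty _) le_rfl (by simp) (by simp) hT
    (by simp)
  obtain ⟨Q', hQQ, hQ'⟩ := ufim_extend g _ T Finset.univ Q le_rfl (by simp) hT hU hQ
  have hPQ : Q' = P := hg.2.unique hQ' hP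
  subst hPQ
  obtain ⟨J, hJ, hxJ⟩ := Q.exists_mem hxT
  have : I = J := Q'.eq_of_mem_parts hI (hQQ hJ) hxI hxJ
  subst this
  exact Q.le hJ

theorem ufim_inj {G : Type*} [AddCommGroup G] {ℓ : ℕ} (g : Fin ℓ → G) (hg : IsUFIM g)
    (P : Finpartition (Finset.univ : Finset (Fin ℓ))) (hP : IsFactorization g P)
    (sel : Finset (Fin ℓ) → Fin ℓ) (hsel : ∀ I ∈ P.parts, sel I ∈ I)
    (A B : Finset (Finset (Fin ℓ))) (hA : A ⊆ P.parts) (hB : B ⊆ P.parts)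
    (h : ∑ I ∈ A, g (sel I) = ∑ I ∈ B, g (sel I)) : A = B := by
  classical
  have hne : ∀ I ∈ P.parts, ∃ y ∈ I, y ≠ sel I := by
    intro I hI
    by_contra! hc
    have h1 : I = {sel I} := by
      ext y
      simp only [Finset.mem_singleton]
      exact ⟨hc y, fun h => h ▸ hsel I hI⟩
    have h2 := (hP I hI).2.1
    rw [h1, Finset.sum_singleton] at h2
    exact hg.1 _ h2
  set c : Finset (Fin ℓ) → Finset (Fin ℓ) := fun I =>
    if I ∈ A then (if I ∈ B then ∅ else {sel I}) else if I ∈ B then I.erase (sel I) else ∅ with hc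
  have hcs : ∀ I ∈ P.parts, c I ⊆ I := by
    intro I hI
    have := hsel I hI
    simp only [hc]
    split_ifs <;> simp [this, Finset.erase_subset]
  have hT : ∑ i ∈ P.parts.biUnion c, g i = 0 := by
    rw [Finset.sum_biUnion]
    · have : ∀ I ∈ P.parts, ∑ i ∈ c I, g i =
          (if I ∈ A then g (sel I) else 0) - (if I ∈ B then g (sel I) else 0) := by
        intro I hI
        simp only [hc]
        split_ifs
        · simp
        · simp
        · rw [Finset.sum_erase_eq_sub (hsel I hI), (hP I hI).2.1]
        · simp
      rw [Finset.sum_congr rfl this, Finset.sum_sub_distrib, Finset.sum_ite_mem,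
        Finset.sum_ite_mem, Finset.inter_eq_right.mpr hA, Finset.inter_eq_right.mpr hB, h, sub_self]
    · intro I hI J hJ hIJ
      exact Finset.disjoint_of_subset_left (hcs I hI)
        (Finset.disjoint_of_subset_right (hcs J hJ) (P.disjoint hI hJ hIJ))
  have key : ∀ I ∈ P.parts, ∀ x ∈ c I, I ⊆ c I := by
    intro I hI x hx y hy
    have h1 := ufim_zero_sum g hg P hP _ hT I hI x (hcs I hI hx)
      (Finset.mem_biUnion.mpr ⟨I, hI, hx⟩) hy
    obtain ⟨J, hJ, hyJ⟩ := Finset.mem_biUnion.mp h1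
    have : I = J := P.eq_of_mem_parts hI hJ hy (hcs J hJ hyJ)
    exact this ▸ hyJ
  ext I
  constructor
  · intro hIA
    by_contra hIB
    have hI := hA hIA
    have hcI : c I = {sel I} := by simp [hc, hIA, hIB]
    obtain ⟨y, hy, hys⟩ := hne I hI
    have := key I hI (sel I) (by simp [hcI]) hy
    rw [hcI] at this
    exact hys (Finset.mem_singleton.mp this)
  · intro hIB
    by_contra hIA
    have hI := hB hIB
    have hcI : c I = I.erase (sel I) := by simp [hc, hIA, hIB]
    obtain ⟨y, hy, hys⟩ := hne I hI
    have := key I hI y (by simp [hcI, hy, hys]) (hsel I hI)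
    rw [hcI] at this
    simp at this

/-- Proposition: if `S` is a UFIM over `G∖{0}` (`G` a nontrivial finite abelian group)
with irreducible factorization `I_1 ⊔ ⋯ ⊔ I_m` and `g_i ∈ S(I_i)` is chosen for each `i`,
then `Σ_{i=1}^m 1/ord(g_i) ≤ m/P⁻(|G|) ≤ (log₂ |G|)/P⁻(|G|)`. -/
theorem sum_chosen_orders_le {G : Type*} [AddCommGroup G] [Fintype G] [Nontrivial G]
    {ℓ : ℕ} (g : Fin ℓ → G) (hg : IsUFIM g)
    (P : Finpartition (Finset.univ : Finset (Fin ℓ))) (hP : IsFactorization g P)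
    (sel : Finset (Fin ℓ) → Fin ℓ) (hsel : ∀ I ∈ P.parts, sel I ∈ I) :
    (∑ I ∈ P.parts, (1 : ℝ) / (addOrderOf (g (sel I)) : ℝ)) ≤
      (P.parts.card : ℝ) / (Nat.minFac (Fintype.card G) : ℝ) ∧
    (P.parts.card : ℝ) / (Nat.minFac (Fintype.card G) : ℝ) ≤
      Real.logb 2 (Fintype.card G) / (Nat.minFac (Fintype.card G) : ℝ) := by
  classical
  have hpp : (Nat.minFac (Fintype.card G)).Prime :=
    Nat.minFac_prime (ne_of_gt Fintype.one_lt_card)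
  have hp : (0 : ℝ) < (Nat.minFac (Fintype.card G) : ℝ) := by exact_mod_cast hpp.pos
  constructor
  · rw [div_eq_mul_one_div, ← nsmul_eq_mul]
    refine Finset.sum_le_card_nsmul _ _ _ fun I _ => ?_
    apply one_div_le_one_div_of_le hp
    have h1 : addOrderOf (g (sel I)) ≠ 1 := by
      rw [Ne, AddMonoid.addOrderOf_eq_one_iff]
      exact hg.1 _
    have h2 := addOrderOf_pos (g (sel I))
    exact_mod_cast Nat.minFac_le_of_dvd (by omega) addOrderOf_dvd_card
  · apply div_le_div_of_nonneg_right _ hp.le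
    have h : 2 ^ P.parts.card ≤ Fintype.card G := by
      rw [← Finset.card_powerset, ← Finset.card_univ]
      refine Finset.card_le_card_of_injOn (fun A => ∑ I ∈ A, g (sel I)) (by simp) ?_
      intro A hA B hB hAB
      simp only [Finset.coe_powerset, Set.mem_preimage, Set.mem_powerset_iff,
        Finset.coe_subset] at hA hB
      exact ufim_inj g hg P hP sel hsel A B hA hB hAB
    rw [Real.le_logb_iff_rpow_le (by norm_num) (by exact_mod_cast Fintype.card_pos),
      Real.rpow_natCast]
    exact_mod_cast h
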